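/- The term pred = λw.λx.§(λy.π₂(§̄(w !(step !̄x))(base y))), where I = λx.x, π₂ = λx⊗y.y, T = λf.λg⊗h.(f⊗(g h)), step z = T z, and base y = T I (I⊗y), is typable as ⊢ pred : Int ⊸ Int, and it computes the predecessor on numerals: pred 0̄ ⇝* 0̄ and, for every natural number n, pred (n+1)̄ ⇝* n̄. -/

import Mathlib

/-!
Typing: write `A = α ⊸ α` and `B = A ⊗ α`.  The template `T` has type `A ⊸ B ⊸ B`, so the
numeral is instantiated at `B`: the boxed step `!(T !̄x)` has type `!(B ⊸ B)`, and the
`§`-box, built from `v : B ⊸ B ⊢ λy.π₂(v (T I (I ⊗ y))) : α ⊸ α`, consumes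
`w !(T !̄x) : §(B ⊸ B)`.  Applications whose head is not a variable are typed by `⊸`-left
followed by a cut on the head.

Computation: `pred m̄` reduces to `λx.§λy.π₂ ((T z)ᵐ (I ⊗ y))` with `z = !̄x`.  Since
`T f (g ⊗ h) ⇝* f ⊗ (g h)`, each step delays the new function in the left component and
applies the previous one.  The first step therefore applies only `I`, and
`(T z)ⁿ⁺¹ (I ⊗ y) ⇝* z ⊗ zⁿ y` (`Steps.template_iter`), so `π₂` returns `zⁿ y`; for `m = 0`
it returns `y`.
-/

/-- Formulas of Intuitionistic Light Affine Logic (ILAL), with de Bruijn indices for the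
propositional variables: `A ::= α | A ⊸ A | A ⊗ A | !A | §A | ∀α.A`. -/
inductive Fm : Type
  | var : ℕ → Fm
  | limp : Fm → Fm → Fm
  | tens : Fm → Fm → Fm
  | bang : Fm → Fm
  | sect : Fm → Fm
  | all : Fm → Fm
deriving DecidableEq

/-- Lift the propositional variables `≥ c` by one. -/
def Fm.lift (c : ℕ) : Fm → Fm
  | .var n => if n < c then .var n else .var (n + 1)
  | .limp a b => .limp (a.lift c) (b.lift c)
  | .tens a b => .tens (a.lift c) (b.lift c)
  | .bang a => .bang (a.lift c)
  | .sect a => .sect (a.lift c)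
  | .all a => .all (a.lift (c + 1))

/-- `Fm.subst c B A` is `A[B/α_c]`. -/
def Fm.subst : ℕ → Fm → Fm → Fm
  | c, B, .var n => if n < c then .var n else if n = c then B else .var (n - 1)
  | c, B, .limp a b => .limp (Fm.subst c B a) (Fm.subst c B b)
  | c, B, .tens a b => .tens (Fm.subst c B a) (Fm.subst c B b)
  | c, B, .bang a => .bang (Fm.subst c B a)
  | c, B, .sect a => .sect (Fm.subst c B a)
  | c, B, .all a => .all (Fm.subst (c + 1) (B.lift 0) a)

/-- Patterns of the concrete syntax `Λ`: `P ::= x | P ⊗ P`. -/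
inductive Pat : Type
  | pvar : Pat
  | ptens : Pat → Pat → Pat
deriving DecidableEq

/-- Number of variables bound by a pattern. -/
def Pat.size : Pat → ℕ
  | .pvar => 1
  | .ptens p q => p.size + q.size

/-- Terms of the concrete syntax `Λ`, with de Bruijn indices (a `λ` with pattern `p`
binds `p.size` consecutive indices, the leftmost pattern variable being index `0`):
`M ::= x | λP.M | (M N) | M ⊗ N | !M | !̄M | §M | §̄M`.  De Bruijn representation makes
terms into canonical representatives of their `α`-equivalence classes. -/
inductive Tm : Type
  | bvar : ℕ → Tm
  | lam : Pat → Tm → Tm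
  | app : Tm → Tm → Tm
  | tens : Tm → Tm → Tm
  | bang : Tm → Tm
  | unbang : Tm → Tm
  | sect : Tm → Tm
  | unsect : Tm → Tm
deriving DecidableEq

/-- Lift the term variables `≥ c` by `d`. -/
def Tm.lift (c d : ℕ) : Tm → Tm
  | .bvar n => if n < c then .bvar n else .bvar (n + d)
  | .lam p t => .lam p (t.lift (c + p.size) d)
  | .app a b => .app (a.lift c d) (b.lift c d)
  | .tens a b => .tens (a.lift c d) (b.lift c d)
  | .bang a => .bang (a.lift c d)
  | .unbang a => .unbang (a.lift c d)
  | .sect a => .sect (a.lift c d)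
  | .unsect a => .unsect (a.lift c d)

/-- Capture-avoiding simultaneous substitution of the list `σ` for the term variables
`c, c+1, …, c + σ.length − 1`, decrementing the higher variables by `σ.length`. -/
def Tm.subst : ℕ → List Tm → Tm → Tm
  | c, σ, .bvar n =>
      if n < c then .bvar n
      else Tm.lift 0 c (σ.getD (n - c) (.bvar (n - c - σ.length)))
  | c, σ, .lam p t => .lam p (Tm.subst (c + p.size) σ t)
  | c, σ, .app a b => .app (Tm.subst c σ a) (Tm.subst c σ b)
  | c, σ, .tens a b => .tens (Tm.subst c σ a) (Tm.subst c σ b)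
  | c, σ, .bang a => .bang (Tm.subst c σ a)
  | c, σ, .unbang a => .unbang (Tm.subst c σ a)
  | c, σ, .sect a => .sect (Tm.subst c σ a)
  | c, σ, .unsect a => .unsect (Tm.subst c σ a)

/-- Rename the free variables of a term along `f`. -/
def Tm.rename (f : ℕ → ℕ) : Tm → Tm
  | .bvar n => .bvar (f n)
  | .lam p t => .lam p (t.rename fun n => if n < p.size then n else f (n - p.size) + p.size)
  | .app a b => .app (a.rename f) (b.rename f)
  | .tens a b => .tens (a.rename f) (b.rename f)
  | .bang a => .bang (a.rename f)
  | .unbang a => .unbang (a.rename f)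
  | .sect a => .sect (a.rename f)
  | .unsect a => .unsect (a.rename f)

/-- Matching a term against a pattern: `Pat.matchTm p N = some [M₁,…,M_m]` when `N` is a
tensor `M₁ ⊗ … ⊗ M_m` of the shape `p` (the leftmost component first). -/
def Pat.matchTm : Pat → Tm → Option (List Tm)
  | .pvar, t => some [t]
  | .ptens p q, .tens a b => do
      let l ← p.matchTm a
      let r ← q.matchTm b
      pure (l ++ r)
  | .ptens _ _, _ => none

/-- The rewriting relation `⇝` of the concrete syntax: the contextual closure of
`(λx₁⊗…⊗x_m.M)(M₁⊗…⊗M_m) ▷ M[M₁/x₁,…,M_m/x_m]`, `!̄!M ▷ M` and `§̄§M ▷ M`. -/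
inductive Step : Tm → Tm → Prop
  | beta {p : Pat} {M N : Tm} {σ : List Tm} :
      Pat.matchTm p N = some σ → Step (.app (.lam p M) N) (Tm.subst 0 σ M)
  | bangRed {M : Tm} : Step (.unbang (.bang M)) M
  | sectRed {M : Tm} : Step (.unsect (.sect M)) M
  | appL {a a' b : Tm} : Step a a' → Step (.app a b) (.app a' b)
  | appR {a b b' : Tm} : Step b b' → Step (.app a b) (.app a b')
  | lamC {p : Pat} {t t' : Tm} : Step t t' → Step (.lam p t) (.lam p t')
  | tensL {a a' b : Tm} : Step a a' → Step (.tens a b) (.tens a' b)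
  | tensR {a b b' : Tm} : Step b b' → Step (.tens a b) (.tens a b')
  | bangC {t t' : Tm} : Step t t' → Step (.bang t) (.bang t')
  | unbangC {t t' : Tm} : Step t t' → Step (.unbang t) (.unbang t')
  | sectC {t t' : Tm} : Step t t' → Step (.sect t) (.sect t')
  | unsectC {t t' : Tm} : Step t t' → Step (.unsect t) (.unsect t')

/-- `⇝*`, the reflexive and transitive closure of `⇝`. -/
def Steps : Tm → Tm → Prop := Relation.ReflTransGen Step

/-- `PatTy p A Ts`: the pattern `p` decomposes the (tensor) formula `A`, its variables
receiving, from left to right, the types in `Ts`. -/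
inductive PatTy : Pat → Fm → List Fm → Prop
  | pvar (A : Fm) : PatTy .pvar A [A]
  | ptens {p q : Pat} {A B : Fm} {Ts Us : List Fm} :
      PatTy p A Ts → PatTy q B Us → PatTy (.ptens p q) (.tens A B) (Ts ++ Us)

/-- The type assignment of ILAL, decorating the sequent calculus of Intuitionistic Light
Affine Logic with the terms of the concrete syntax `Λ`.  The context is a list of
formulas, the `i`-th entry typing the free variable `i`.  The rules are: axiom, cut (by
substitution), exchange, unconstrained weakening, contraction (identifying two variables
of type `!A`), `⊸`-left (by application) and `⊸`-right (by pattern abstraction, which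
also accounts for `⊗`-left), `⊗`-right, the `!`-rule with at most one assumption (boxing
the term with `!` and marking the assumption with `!̄`), the `§`-rule (boxing with `§`,
marking `!`-assumptions with `!̄` and `§`-assumptions with `§̄`), and `∀`-left/right with
no term constructor. -/
inductive Typed : List Fm → Tm → Fm → Prop
  | ax (A : Fm) : Typed [A] (.bvar 0) A
  | cut {Γ Δ : List Fm} {M N : Tm} {A B : Fm} :
      Typed Γ M A → Typed (A :: Δ) N B →
      Typed (Δ ++ Γ) (Tm.subst 0 [M.lift 0 Δ.length] N) B
  | exch {Γ₁ Γ₂ : List Fm} {A B C : Fm} {M : Tm} :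
      Typed (Γ₁ ++ A :: B :: Γ₂) M C →
      Typed (Γ₁ ++ B :: A :: Γ₂)
        (M.rename fun n =>
          if n = Γ₁.length then n + 1 else if n = Γ₁.length + 1 then n - 1 else n) C
  | weak {Γ : List Fm} {M : Tm} {B : Fm} (A : Fm) :
      Typed Γ M B → Typed (A :: Γ) (M.lift 0 1) B
  | contr {Γ : List Fm} {M : Tm} {A B : Fm} :
      Typed (.bang A :: .bang A :: Γ) M B →
      Typed (.bang A :: Γ) (M.rename fun n => if n ≤ 1 then 0 else n - 1) B
  | limpL {Γ Δ : List Fm} {M N : Tm} {A B C : Fm} :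
      Typed Γ M A → Typed (B :: Δ) N C →
      Typed (.limp A B :: Δ ++ Γ)
        (Tm.subst 0 [.app (.bvar 0) (M.lift 0 (Δ.length + 1))] (N.lift 1 1)) C
  | limpR {Γ : List Fm} {p : Pat} {A : Fm} {Ts : List Fm} {M : Tm} {B : Fm} :
      PatTy p A Ts → Typed (Ts ++ Γ) M B → Typed Γ (.lam p M) (.limp A B)
  | tensR {Γ Δ : List Fm} {M N : Tm} {A B : Fm} :
      Typed Γ M A → Typed Δ N B →
      Typed (Γ ++ Δ) (.tens M (N.lift 0 Γ.length)) (.tens A B)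
  | bangNil {M : Tm} {A : Fm} :
      Typed [] M A → Typed [] (.bang M) (.bang A)
  | bangOne {M : Tm} {A B : Fm} :
      Typed [B] M A →
      Typed [.bang B] (.bang (Tm.subst 0 [.unbang (.bvar 0)] M)) (.bang A)
  | sectRule {Δ Γ : List Fm} {M : Tm} {C : Fm} :
      Typed (Δ ++ Γ) M C →
      Typed (Δ.map Fm.bang ++ Γ.map Fm.sect)
        (.sect (Tm.subst 0
          (((List.range Δ.length).map fun i => .unbang (.bvar i)) ++
           ((List.range Γ.length).map fun i => .unsect (.bvar (Δ.length + i)))) M))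
        (.sect C)
  | allL {Γ : List Fm} {A B C : Fm} {M : Tm} :
      Typed (Fm.subst 0 B A :: Γ) M C → Typed (.all A :: Γ) M C
  | allR {Γ : List Fm} {M : Tm} {A : Fm} :
      Typed (Γ.map (Fm.lift 0)) M A → Typed Γ M (.all A)

/-- The type of the tally integers: `Int = ∀α.!(α⊸α)⊸§(α⊸α)`. -/
def IntF : Fm :=
  .all (.limp (.bang (.limp (.var 0) (.var 0))) (.sect (.limp (.var 0) (.var 0))))

/-- The body `!̄x(…(!̄x y)…)` with `n` occurrences of `!̄x` (here `y` is index `0` and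
`x` is index `1`). -/
def churchBody : ℕ → Tm
  | 0 => .bvar 0
  | n + 1 => .app (.unbang (.bvar 1)) (churchBody n)

/-- The tally numeral `n̄ = λx.§(λy.!̄x(…(!̄x y)…))` with `n` occurrences of `!̄x`
(in particular `0̄ = λx.§λy.y`). -/
def church (n : ℕ) : Tm := .lam .pvar (.sect (.lam .pvar (churchBody n)))

/-- The identity `I = λx.x`. -/
def idT : Tm := .lam .pvar (.bvar 0)

/-- The second projection `π₂ = λx⊗y.y`. -/
def pi2T : Tm := .lam (.ptens .pvar .pvar) (.bvar 1)

/-- The template `T = λf.λg⊗h.(f ⊗ (g h))`. -/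
def TT : Tm :=
  .lam .pvar (.lam (.ptens .pvar .pvar) (.tens (.bvar 2) (.app (.bvar 0) (.bvar 1))))

/-- The predecessor `pred = λw.λx.§(λy.π₂(§̄(w !(step !̄x))(base y)))`, where
`step z = T z` and `base y = T I (I ⊗ y)`. -/
def predT : Tm :=
  .lam .pvar (.lam .pvar (.sect (.lam .pvar
    (.app pi2T
      (.app (.unsect (.app (.bvar 2) (.bang (.app TT (.unbang (.bvar 1))))))
        (.app (.app TT idT) (.tens idT (.bvar 0))))))))

/-! ### Typing -/

/-- The formula `α ⊸ α`. -/
def endoF : Fm := .limp (.var 0) (.var 0)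

/-- The formula `(α ⊸ α) ⊗ α` at which the numeral is instantiated. -/
def pairF : Fm := .tens endoF (.var 0)

theorem typed_idT : Typed [] idT endoF :=
  .limpR (.pvar _) (.ax _)

theorem typed_pi2T : Typed [] pi2T (.limp pairF (.var 0)) :=
  .limpR (Ts := [endoF, .var 0]) (.ptens (.pvar _) (.pvar _)) (.weak _ (.ax _))

theorem typed_TT : Typed [] TT (.limp endoF (.limp pairF pairF)) := by
  have gh : Typed [endoF, .var 0] (.app (.bvar 0) (.bvar 1)) (.var 0) :=
    .limpL (Δ := []) (.ax _) (.ax _)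
  have body := Typed.tensR (.ax endoF) gh
  -- `⊗`-right puts `f` first in the context; two exchanges move it behind `g` and `h`.
  have body' := (body.exch (Γ₁ := [])).exch (Γ₁ := [endoF])
  exact .limpR (.pvar _) (.limpR (Ts := [endoF, .var 0]) (.ptens (.pvar _) (.pvar _)) body')

/-- `z : α ⊸ α ⊢ T z`. -/
theorem typed_step : Typed [endoF] (.app TT (.bvar 0)) (.limp pairF pairF) :=
  .cut (Γ := []) typed_TT (.limpL (Δ := []) (.ax _) (.ax _))

/-- `y : α ⊢ T I (I ⊗ y)`. -/
theorem typed_base :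
    Typed [.var 0] (.app (.app TT idT) (.tens idT (.bvar 0))) pairF := by
  have ti : Typed [] (.app TT idT) (.limp pairF pairF) :=
    .cut (Γ := []) (Δ := []) typed_idT typed_step
  have iy : Typed [.var 0] (.tens idT (.bvar 0)) pairF := .tensR (Γ := []) typed_idT (.ax _)
  exact .cut (Γ := []) ti (.limpL (Δ := []) iy (.ax _))

/-- `v : B ⊸ B ⊢ λy.π₂(v (T I (I ⊗ y))) : α ⊸ α`, the content of the `§`-box of `pred`. -/
theorem typed_box :
    Typed [.limp pairF pairF]
      (.lam .pvar (.app pi2T (.app (.bvar 1) (.app (.app TT idT) (.tens idT (.bvar 0))))))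
      endoF := by
  have vb : Typed [.limp pairF pairF, .var 0]
      (.app (.bvar 0) (.app (.app TT idT) (.tens idT (.bvar 1)))) pairF :=
    .limpL (Δ := []) typed_base (.ax _)
  have pvb : Typed [.limp pairF pairF, .var 0]
      (.app pi2T (.app (.bvar 0) (.app (.app TT idT) (.tens idT (.bvar 1))))) (.var 0) :=
    .cut (Γ := []) typed_pi2T (.limpL (Δ := []) vb (.ax _))
  exact .limpR (.pvar _) (pvb.exch (Γ₁ := []))

theorem typed_predT : Typed [] predT (.limp IntF IntF) := by
  have stepBox := Typed.bangOne typed_step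
  have box := Typed.sectRule (Δ := []) (Γ := [.limp pairF pairF]) typed_box
  have body := Typed.limpL (Δ := []) stepBox box
  have body' : Typed [IntF, .bang endoF] _ _ := Typed.allL (B := pairF) body
  exact .limpR (.pvar _) (.allR (.limpR (.pvar _) (body'.exch (Γ₁ := []))))

/-! ### Congruence of `⇝*` -/

namespace Steps

theorem congr {F : Tm → Tm} (hF : ∀ {a b : Tm}, Step a b → Step (F a) (F b)) {a b : Tm}
    (h : Steps a b) : Steps (F a) (F b) := by
  induction h with
  | refl => exact Relation.ReflTransGen.refl
  | tail _ hs ih => exact Relation.ReflTransGen.tail ih (hF hs)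

theorem app {a a' b b' : Tm} (ha : Steps a a') (hb : Steps b b') :
    Steps (.app a b) (.app a' b') :=
  Relation.ReflTransGen.trans
    (congr (F := fun t => Tm.app t b) Step.appL ha)
    (congr (F := fun t => Tm.app a' t) Step.appR hb)

theorem tensR {a b b' : Tm} (hb : Steps b b') : Steps (.tens a b) (.tens a b') :=
  congr (F := fun t => Tm.tens a t) Step.tensR hb

theorem lamC {p : Pat} {t t' : Tm} (h : Steps t t') : Steps (.lam p t) (.lam p t') :=
  congr (F := fun t => Tm.lam p t) Step.lamC h

theorem sectC {t t' : Tm} (h : Steps t t') : Steps (.sect t) (.sect t') :=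
  congr (F := fun t => Tm.sect t) Step.sectC h

theorem unsectC {t t' : Tm} (h : Steps t t') : Steps (.unsect t) (.unsect t') :=
  congr (F := fun t => Tm.unsect t) Step.unsectC h

theorem refl (t : Tm) : Steps t t := Relation.ReflTransGen.refl

theorem trans {a b c : Tm} (h : Steps a b) (h' : Steps b c) : Steps a c :=
  Relation.ReflTransGen.trans h h'

theorem beta {p : Pat} {M N R : Tm} {σ : List Tm} (h : Pat.matchTm p N = some σ)
    (hR : Tm.subst 0 σ M = R) : Steps (.app (.lam p M) N) R :=
  hR ▸ Relation.ReflTransGen.single (.beta h)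

end Steps

/-! ### Iterated application -/

/-- `f (… (f b) …)` with `n` occurrences of `f`. -/
def iterApp (f b : Tm) : ℕ → Tm
  | 0 => b
  | n + 1 => .app f (iterApp f b n)

theorem churchBody_eq (n : ℕ) : churchBody n = iterApp (.unbang (.bvar 1)) (.bvar 0) n := by
  induction n with
  | zero => rfl
  | succ n ih => simp [churchBody, iterApp, ih]

theorem subst_iterApp (c : ℕ) (σ : List Tm) (f b : Tm) (n : ℕ) :
    Tm.subst c σ (iterApp f b n) = iterApp (Tm.subst c σ f) (Tm.subst c σ b) n := by
  induction n with
  | zero => rfl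
  | succ n ih => simp [Tm.subst, iterApp, ih]

theorem lift_iterApp (c d : ℕ) (f b : Tm) (n : ℕ) :
    Tm.lift c d (iterApp f b n) = iterApp (Tm.lift c d f) (Tm.lift c d b) n := by
  induction n with
  | zero => rfl
  | succ n ih => simp [Tm.lift, iterApp, ih]

theorem Tm.lift_zero (c : ℕ) (t : Tm) : t.lift c 0 = t := by
  induction t generalizing c <;> simp_all [Tm.lift]

theorem lift_church (d n : ℕ) : Tm.lift 0 d (church n) = church n := by
  simp [church, churchBody_eq, Tm.lift, lift_iterApp, Pat.size]

theorem Steps.iterApp {f f' b b' : Tm} (hf : Steps f f') (hb : Steps b b') (n : ℕ) :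
    Steps (iterApp f b n) (iterApp f' b' n) := by
  induction n with
  | zero => exact hb
  | succ n ih => exact hf.app ih

/-! ### Reduction of the predecessor

Inside the `§`-box, `y` is index `0` and `x` is index `1`. -/

theorem Steps.idT_app (t : Tm) : Steps (.app idT t) t :=
  .beta rfl (by simp [Tm.subst, Tm.lift_zero])

/-- `T !̄x (g ⊗ h) ⇝* !̄x ⊗ (g h)`. -/
theorem Steps.template (g h : Tm) :
    Steps (.app (.app TT (.unbang (.bvar 1))) (.tens g h))
      (.tens (.unbang (.bvar 1)) (.app g h)) :=
  (Steps.app (.beta rfl rfl) (.refl _)).trans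
    (.beta rfl (by simp [Tm.subst, Tm.lift, Tm.lift_zero, Pat.size]))

/-- `T I (I ⊗ y) ⇝* I ⊗ y`. -/
theorem Steps.base (y : Tm) :
    Steps (.app (.app TT idT) (.tens idT y)) (.tens idT y) := by
  have first : Steps (.app (.app TT idT) (.tens idT y)) (.tens idT (.app idT y)) :=
    (Steps.app (.beta rfl rfl) (.refl _)).trans
      (.beta rfl (by simp [Tm.subst, Tm.lift, Tm.lift_zero, Pat.size, idT]))
  exact first.trans (Steps.idT_app y).tensR

/-- After `n + 1` steps from `I ⊗ y`, only `n` copies of `!̄x` have been applied to `y`. -/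
theorem Steps.template_iter (y : Tm) (n : ℕ) :
    Steps (_root_.iterApp (.app TT (.unbang (.bvar 1))) (.tens idT y) (n + 1))
      (.tens (.unbang (.bvar 1)) (_root_.iterApp (.unbang (.bvar 1)) y n)) := by
  induction n with
  | zero => exact (Steps.template _ _).trans (Steps.idT_app y).tensR
  | succ n ih => exact (Steps.app (.refl _) ih).trans (Steps.template _ _)

theorem Steps.pi2 (a b : Tm) : Steps (.app pi2T (.tens a b)) b :=
  .beta rfl (by simp [Tm.subst, Tm.lift_zero])

/-- `pred m̄ ⇝* λx.§λy.π₂((T !̄x)ᵐ (I ⊗ y))`. -/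
theorem Steps.pred_unfold (m : ℕ) :
    Steps (.app predT (church m))
      (.lam .pvar (.sect (.lam .pvar (.app pi2T
        (_root_.iterApp (.app TT (.unbang (.bvar 1))) (.tens idT (.bvar 0)) m))))) := by
  have start : Steps (.app predT (church m))
      (.lam .pvar (.sect (.lam .pvar (.app pi2T
        (.app (.unsect (.app (church m) (.bang (.app TT (.unbang (.bvar 1))))))
          (.app (.app TT idT) (.tens idT (.bvar 0)))))))) :=
    .beta rfl (by
      simp [Tm.subst, Pat.size, lift_church, pi2T, TT, idT])
  refine start.trans (Steps.lamC (Steps.sectC (Steps.lamC (Steps.app (.refl _) ?_))))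
  -- Apply the numeral to the boxed step and open the resulting `§`-box.
  have num : Steps (.app (church m) (.bang (.app TT (.unbang (.bvar 1)))))
      (.sect (.lam .pvar (_root_.iterApp (.unbang (.bang (.app TT (.unbang (.bvar 2)))))
        (.bvar 0) m))) :=
    .beta rfl (by
      simp [churchBody_eq, subst_iterApp, Tm.subst, Tm.lift, Pat.size, TT])
  have opened := num.unsectC.trans (Relation.ReflTransGen.single .sectRed)
  refine (Steps.app opened (Steps.base _)).trans ?_
  refine Steps.trans (.beta rfl rfl) ?_
  rw [subst_iterApp]
  exact Steps.iterApp (Relation.ReflTransGen.single .bangRed) (.refl _) m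

/-- `pred` is typable as `⊢ pred : Int ⊸ Int` and it computes the predecessor on the
numerals: `pred 0̄ ⇝* 0̄` and, for every natural number `n`, `pred (n+1)̄ ⇝* n̄`. -/
theorem pred_typable_and_correct :
    Typed [] predT (.limp IntF IntF) ∧
    Steps (.app predT (church 0)) (church 0) ∧
    ∀ n : ℕ, Steps (.app predT (church (n + 1))) (church n) := by
  refine ⟨typed_predT, ?_, fun n => ?_⟩
  · exact (Steps.pred_unfold 0).trans (Steps.lamC (Steps.sectC (Steps.lamC (Steps.pi2 _ _))))
  · refine (Steps.pred_unfold (n + 1)).trans ?_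
    rw [church, churchBody_eq]
    exact Steps.lamC (Steps.sectC (Steps.lamC
      ((Steps.app (.refl _) (Steps.template_iter _ n)).trans (Steps.pi2 _ _))))
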